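/- Let X be a Cantor space with a fixed compatible metric and K a dynamical simplex on X. Given any KR-partition T for K and any ε > 0, there exists a KR-partition S for K which refines T and whose base and top both have diameter less than ε. -/

import Mathlib

/-!
The refinement is obtained by choosing its base and top in advance. Fix a nonempty column `i₀` of
`T`, and choose disjoint clopen sets `U` in its first level and `V` in its last level, of small
diameter, `K`-equivalent, and of less than half the mass of the level
(`DynSimplex.exists_small_pair`). By goodness, column `i₀` is cut into a subcolumn starting with
`U`, a disjoint subcolumn ending with `V`, and a remainder (`DynSimplex.exists_start_finish`).

Since the measures are atomless and `K` is compact, this remainder and the other columns of `T` can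
be cut vertically into finitely many subcolumns, each of base measure less than that of `U` for every
measure in `K` (`DynSimplex.exists_small_labelling`). By goodness the base of the `t`-th thin
subcolumn has a copy `E t` inside `U`. Partition `U` according to which of the sets `E t` a point
belongs to. Above the class of points lying in exactly the `E t` with `t ∈ c`, stack the matching
part of the subcolumn starting with `U`, then the matching parts of the thin subcolumns `t ∈ c`, and
lastly the matching part of the subcolumn ending with `V` (`DynSimplex.stack`). Matching parts exist
because a finite clopen partition of a set can be copied to any `K`-equivalent set
(`DynSimplex.exists_transport`). Everything is used exactly once, so this is a KR-partition; it
refines `T`, its base lies in `U` and its top in `V`.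
-/

open MeasureTheory

namespace DynSimplex

variable {X : Type*} [TopologicalSpace X] [MeasurableSpace X] [OpensMeasurableSpace X]

/-- `g` preserves the probability measure `μ`, i.e. `g_*μ = μ`. -/
def Preserves (g : X ≃ₜ X) (μ : ProbabilityMeasure X) : Prop :=
  (μ : Measure X).map g = (μ : Measure X)

/-- A homeomorphism is minimal if all of its (two-sided) orbits are dense. -/
def IsMinimal (g : X ≃ₜ X) : Prop :=
  ∀ x : X, Dense (Set.range fun n : ℤ => (g.toEquiv ^ n) x)

/-- A set of probability measures is good if for all clopen `A`, `B` with `μ A < μ B` for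
all `μ ∈ K`, there is a clopen `C ⊆ B` with `μ C = μ A` for all `μ ∈ K`. -/
def Good (K : Set (ProbabilityMeasure X)) : Prop :=
  ∀ A B : Set X, IsClopen A → IsClopen B → (∀ μ ∈ K, μ A < μ B) →
    ∃ C : Set X, IsClopen C ∧ C ⊆ B ∧ ∀ μ ∈ K, μ C = μ A

/-- Approximate divisibility of a set of probability measures. -/
def ApproximatelyDivisible (K : Set (ProbabilityMeasure X)) : Prop :=
  ∀ A : Set X, IsClopen A → ∀ n : ℕ, 1 ≤ n → ∀ ε : ℝ, 0 < ε →
    ∃ B : Set X, IsClopen B ∧ B ⊆ A ∧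
      ∀ μ ∈ K, (μ A : ℝ) - ε ≤ (n : ℝ) * (μ B : ℝ) ∧ (n : ℝ) * (μ B : ℝ) ≤ (μ A : ℝ)

/-- A probability measure has full support if every nonempty open set has positive measure. -/
def FullSupport (μ : ProbabilityMeasure X) : Prop :=
  ∀ U : Set X, IsOpen U → U.Nonempty → 0 < μ U

/-- A probability measure is atomless if all singletons are null. -/
def Atomless (μ : ProbabilityMeasure X) : Prop :=
  ∀ x : X, μ {x} = 0

/-- Convexity of a set of probability measures (as a subset of the `ℝ≥0`-module of
finite measures). -/
def ProbConvex (K : Set (ProbabilityMeasure X)) : Prop :=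
  Convex NNReal (ProbabilityMeasure.toFiniteMeasure '' K)

/-- The set of extreme points of a set of probability measures. -/
def ProbExtremePoints (K : Set (ProbabilityMeasure X)) : Set (ProbabilityMeasure X) :=
  ProbabilityMeasure.toFiniteMeasure ⁻¹'
    (Set.extremePoints NNReal (ProbabilityMeasure.toFiniteMeasure '' K))

/-- A dynamical simplex: a nonempty compact convex set of atomless, fully supported
probability measures which is good and approximately divisible. -/
def DynamicalSimplex (K : Set (ProbabilityMeasure X)) : Prop :=
  K.Nonempty ∧ IsCompact K ∧ ProbConvex K ∧
    (∀ μ ∈ K, Atomless μ ∧ FullSupport μ) ∧ Good K ∧ ApproximatelyDivisible K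

/-- Membership in the full group of `g`. -/
def InFullGroup (g h : X ≃ₜ X) : Prop :=
  ∀ x : X, ∃ n : ℤ, h x = (g.toEquiv ^ n) x

/-- Membership in the topological full group of `g`: `h` is given piecewise by powers of `g`
on a finite clopen partition of `X`. -/
def InTopologicalFullGroup (g h : X ≃ₜ X) : Prop :=
  ∃ (k : ℕ) (A : Fin k → Set X) (n : Fin k → ℤ),
    (∀ i, IsClopen (A i)) ∧ (∀ x : X, ∃! i, x ∈ A i) ∧
    ∀ i, ∀ x ∈ A i, h x = (g.toEquiv ^ (n i)) x

/-- `g` preserves every measure in `K` (i.e. `g` belongs to the group `G`). -/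
def PreservesAll (K : Set (ProbabilityMeasure X)) (g : X ≃ₜ X) : Prop :=
  ∀ μ ∈ K, Preserves g μ

/-- `g` is `K`-saturated: any two `K`-equivalent clopen sets are mapped one to the other by
an element of the topological full group of `g`. -/
def KSaturated (K : Set (ProbabilityMeasure X)) (g : X ≃ₜ X) : Prop :=
  ∀ U V : Set X, IsClopen U → IsClopen V → (∀ μ ∈ K, μ U = μ V) →
    ∃ h : X ≃ₜ X, InTopologicalFullGroup g h ∧ h '' U = V

/-- The topology of uniform convergence on the homeomorphism group of a compact space
(the compact-open topology, induced from `C(X, X)`). -/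
instance : TopologicalSpace (X ≃ₜ X) :=
  TopologicalSpace.induced (fun h : X ≃ₜ X => (h : C(X, X))) inferInstance

/-- A KR-partition for `K`: a finite family of columns, each column being a finite sequence of
clopen sets which are all `K`-equivalent, the atoms of all columns forming a partition of `X`. -/
structure KRPartition (X : Type*) [TopologicalSpace X] [MeasurableSpace X]
    (K : Set (ProbabilityMeasure X)) where
  numCols : ℕ
  height : Fin numCols → ℕ
  atom : (i : Fin numCols) → Fin (height i + 1) → Set X
  clopen : ∀ i j, IsClopen (atom i j)
  equivK : ∀ i j j', ∀ μ ∈ K, μ (atom i j) = μ (atom i j')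
  partition : ∀ x : X, ∃! p : (i : Fin numCols) × Fin (height i + 1), x ∈ atom p.1 p.2

/-- The base of a KR-partition: the union of the first atoms of the columns. -/
def KRPartition.base {K : Set (ProbabilityMeasure X)} (T : KRPartition X K) : Set X :=
  ⋃ i, T.atom i 0

/-- The top of a KR-partition: the union of the last atoms of the columns. -/
def KRPartition.top {K : Set (ProbabilityMeasure X)} (T : KRPartition X K) : Set X :=
  ⋃ i, T.atom i (Fin.last _)

/-- `S` refines `T`: the base (resp. top) of `S` is contained in the base (resp. top) of `T`,
and every column of `S` is obtained by cutting and stacking columns of `T`. -/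
def KRPartition.Refines {K : Set (ProbabilityMeasure X)} (S T : KRPartition X K) : Prop :=
  S.base ⊆ T.base ∧ S.top ⊆ T.top ∧
  ∀ c : Fin S.numCols, ∃ (m : ℕ) (idx : Fin (m + 1) → Fin T.numCols)
    (piece : (k : Fin (m + 1)) → Fin (T.height (idx k) + 1) → Set X),
    (∀ k j, piece k j ⊆ T.atom (idx k) j) ∧
    (S.height c + 1 = ∑ k : Fin (m + 1), (T.height (idx k) + 1)) ∧
    ∀ (k : Fin (m + 1)) (j : Fin (T.height (idx k) + 1))
      (hlt : (∑ l ∈ Finset.Iio k, (T.height (idx l) + 1)) + (j : ℕ) < S.height c + 1),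
      S.atom c ⟨(∑ l ∈ Finset.Iio k, (T.height (idx l) + 1)) + (j : ℕ), hlt⟩ = piece k j

/-- A KR-partition is compatible with a clopen set `U` if `U` is a union of its atoms,
equivalently every atom is either contained in `U` or disjoint from it. -/
def KRPartition.Compatible {K : Set (ProbabilityMeasure X)} (S : KRPartition X K)
    (U : Set X) : Prop :=
  ∀ i j, S.atom i j ⊆ U ∨ Disjoint (S.atom i j) U

end DynSimplex

namespace DynSimplex

open Set

/-! ### Concatenating pieces of columns into a KR-partition -/

section Assembly

variable {X : Type*} [TopologicalSpace X] [MeasurableSpace X]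
  {K : Set (ProbabilityMeasure X)}

theorem sum_Iio_eq_sum_castLE {m : ℕ} (f : Fin m → ℕ) (k : Fin m) :
    ∑ l ∈ Finset.Iio k, f l = ∑ i : Fin k, f (Fin.castLE k.2.le i) := by
  symm
  refine Finset.sum_bij (fun i _ => Fin.castLE k.2.le i) ?_ ?_ ?_ ?_
  · intro a _
    simp [Fin.lt_def]
  · intro a _ b _ h
    simpa [Fin.ext_iff] using h
  · intro b hb
    have hb' : b < k := by simpa using hb
    exact ⟨⟨b, hb'⟩, Finset.mem_univ _, rfl⟩
  · intros; rfl

/-- Pure bookkeeping behind cutting and stacking: if column `c` is prescribed as a sequence of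
`m c + 1` pieces of columns of `T`, and all the pieces together partition `X`, then the
concatenations form a KR-partition refining `T`. The levels of a concatenation are numbered by
`finSigmaFinEquiv`. -/
theorem assemble (T : KRPartition X K) (n : ℕ) (m : Fin n → ℕ)
    (idx : (c : Fin n) → Fin (m c + 1) → Fin T.numCols)
    (piece : (c : Fin n) → (k : Fin (m c + 1)) → Fin (T.height (idx c k) + 1) → Set X)
    (hclopen : ∀ c k j, IsClopen (piece c k j))
    (hsub : ∀ c k j, piece c k j ⊆ T.atom (idx c k) j)
    (hequiv : ∀ c k j k' j', ∀ μ ∈ K, μ (piece c k j) = μ (piece c k' j'))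
    (hpart : ∀ x : X, ∃! p : (c : Fin n) × (k : Fin (m c + 1)) × Fin (T.height (idx c k) + 1),
      x ∈ piece p.1 p.2.1 p.2.2) :
    ∃ S : KRPartition X K, S.Refines T ∧ (S.base ⊆ ⋃ c, piece c 0 0) ∧
      (S.top ⊆ ⋃ c, piece c (Fin.last _) (Fin.last _)) := by
  have hsum : ∀ c, (∑ k, (T.height (idx c k) + 1)) - 1 + 1 = ∑ k, (T.height (idx c k) + 1) := by
    intro c
    rw [Fin.sum_univ_succ]
    omega
  let ψ : (c : Fin n) → ((k : Fin (m c + 1)) × Fin (T.height (idx c k) + 1)) ≃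
      Fin ((∑ k, (T.height (idx c k) + 1)) - 1 + 1) := fun c =>
    finSigmaFinEquiv.trans (finCongr (hsum c).symm)
  have hψ : ∀ c k j, ((ψ c ⟨k, j⟩ : Fin _) : ℕ) =
      (∑ l ∈ Finset.Iio k, (T.height (idx c l) + 1)) + (j : ℕ) := by
    intro c k j
    rw [sum_Iio_eq_sum_castLE (fun l => T.height (idx c l) + 1) k]
    simp [ψ, finSigmaFinEquiv_apply]
  have hψ0 : ∀ c, (ψ c).symm 0 = ⟨0, 0⟩ := by
    intro c
    rw [Equiv.symm_apply_eq]
    apply Fin.ext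
    rw [hψ]
    have : Finset.Iio (0 : Fin (m c + 1)) = ∅ := by ext a; simp
    simp [this]
  have hψl : ∀ c, (ψ c).symm (Fin.last _) = ⟨Fin.last _, Fin.last _⟩ := by
    intro c
    rw [Equiv.symm_apply_eq]
    apply Fin.ext
    rw [hψ, sum_Iio_eq_sum_castLE (fun l => T.height (idx c l) + 1)]
    simp only [Fin.val_last]
    rw [Fin.sum_univ_castSucc]
    have : ∀ i : Fin (m c), Fin.castLE (Fin.last (m c)).2.le i = i.castSucc := fun i => rfl
    change _ = (∑ i : Fin (m c), (T.height (idx c (Fin.castLE (Fin.last (m c)).2.le i)) + 1)) + _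
    simp only [this]
    omega
  let S : KRPartition X K :=
    { numCols := n
      height := fun c => (∑ k, (T.height (idx c k) + 1)) - 1
      atom := fun c r => piece c ((ψ c).symm r).1 ((ψ c).symm r).2
      clopen := fun c r => hclopen _ _ _
      equivK := fun c r r' => hequiv _ _ _ _ _
      partition := by
        intro x
        obtain ⟨⟨c, k, j⟩, hx, huniq⟩ := hpart x
        refine ⟨⟨c, ψ c ⟨k, j⟩⟩, ?_, ?_⟩
        · change x ∈ piece c ((ψ c).symm (ψ c ⟨k, j⟩)).1 ((ψ c).symm (ψ c ⟨k, j⟩)).2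
          rw [Equiv.symm_apply_apply]
          exact hx
        · rintro ⟨c', r⟩ hx'
          have h := huniq ⟨c', (ψ c').symm r⟩ hx'
          obtain ⟨rfl, h2⟩ := Sigma.mk.inj_iff.1 h
          have h3 := eq_of_heq h2
          rw [Equiv.symm_apply_eq] at h3
          rw [h3] }
  have hS0 : ∀ c : Fin n, S.atom c 0 = piece c 0 0 := by
    intro c
    change piece c ((ψ c).symm 0).1 ((ψ c).symm 0).2 = _
    rw [hψ0]
  have hSl : ∀ c : Fin n, S.atom c (Fin.last _) = piece c (Fin.last _) (Fin.last _) := by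
    intro c
    change piece c ((ψ c).symm (Fin.last _)).1 ((ψ c).symm (Fin.last _)).2 = _
    rw [hψl]
  refine ⟨S, ⟨?_, ?_, ?_⟩, ?_, ?_⟩
  · refine iUnion_subset fun c => ?_
    rw [hS0 c]
    exact (hsub c 0 0).trans (subset_iUnion (fun i => T.atom i 0) (idx c 0))
  · refine iUnion_subset fun c => ?_
    rw [hSl c]
    exact (hsub c _ _).trans (subset_iUnion (fun i => T.atom i (Fin.last _)) (idx c _))
  · intro c
    refine ⟨m c, idx c, piece c, hsub c, hsum c, ?_⟩
    intro k j hlt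
    change piece c ((ψ c).symm ⟨_, hlt⟩).1 ((ψ c).symm ⟨_, hlt⟩).2 = _
    have : (ψ c).symm ⟨_, hlt⟩ = ⟨k, j⟩ := by
      rw [Equiv.symm_apply_eq]
      apply Fin.ext
      rw [hψ]
    rw [this]
  · exact iUnion_mono fun c => (hS0 c).subset
  · exact iUnion_mono fun c => (hSl c).subset

end Assembly

/-! ### Consequences of goodness and full support -/

section Measures

theorem eq_empty_of_null {X : Type*} [TopologicalSpace X] [MeasurableSpace X]
    {K : Set (ProbabilityMeasure X)} (hne : K.Nonempty) (hfull : ∀ μ ∈ K, FullSupport μ) {A : Set X}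
    (hA : IsOpen A) (h : ∀ μ ∈ K, μ A = 0) : A = ∅ := by
  obtain ⟨μ, hμ⟩ := hne
  by_contra hA'
  exact (hfull μ hμ A hA (nonempty_iff_ne_empty.2 hA')).ne' (h μ hμ)

variable {X : Type*} [TopologicalSpace X] [MeasurableSpace X] [OpensMeasurableSpace X]
  {K : Set (ProbabilityMeasure X)}

theorem measure_diff_add (μ : ProbabilityMeasure X) {A B : Set X} (hB : IsClopen B)
    (h : B ⊆ A) : μ (A \ B) + μ B = μ A := by
  have h1 := measure_sdiff_add_inter (μ := (μ : Measure X)) A hB.isOpen.measurableSet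
  rw [inter_eq_self_of_subset_right h] at h1
  apply ENNReal.coe_injective
  push_cast
  simpa using h1

theorem measure_union_eq (μ : ProbabilityMeasure X) {A B : Set X} (hB : IsClopen B)
    (h : Disjoint A B) : μ (A ∪ B) = μ A + μ B := by
  have h1 := measure_diff_add μ hB (subset_union_right (s := A))
  rw [union_sdiff_right, h.sdiff_eq_left] at h1
  exact h1.symm

/-- Goodness asks for strict inequalities; full support makes them automatic for a proper clopen
subset `A'` of `A`, so a copy of `A'` can be found in any `B` equivalent to `A`. -/
theorem exists_subset_equiv (hgood : Good K) (hfull : ∀ μ ∈ K, FullSupport μ)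
    {A A' B : Set X} (hA : IsClopen A) (hA' : IsClopen A') (hB : IsClopen B) (hsub : A' ⊆ A)
    (hAB : ∀ μ ∈ K, μ A = μ B) :
    ∃ C, IsClopen C ∧ C ⊆ B ∧ ∀ μ ∈ K, μ C = μ A' := by
  by_cases h : A' = A
  · subst h
    exact ⟨B, hB, Subset.rfl, fun μ hμ => (hAB μ hμ).symm⟩
  · refine hgood A' B hA' hB fun μ hμ => ?_
    have hne : (A \ A').Nonempty := by
      rw [sdiff_nonempty]
      exact fun h' => h (hsub.antisymm h')
    have h1 := hfull μ hμ _ (hA.diff hA').isOpen hne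
    have h2 := measure_diff_add μ hA' hsub
    rw [← hAB μ hμ, ← h2]
    exact lt_add_of_pos_left _ h1

/-- If `A` and `B` are `K`-equivalent, every finite clopen partition of `A` can be copied to `B`
piece by piece. Partitions are encoded as labellings `f`, `g` with clopen fibres over `A`, `B`, which
makes disjointness automatic; the proof is by induction on the set `s` of labels in use. -/
theorem exists_transport (hne : K.Nonempty) (hgood : Good K) (hfull : ∀ μ ∈ K, FullSupport μ)
    {ι : Type*} [DecidableEq ι] (f : X → ι) (s : Finset ι) :
    ∀ A B : Set X, IsClopen A → IsClopen B → (∀ i, IsClopen (A ∩ f ⁻¹' {i})) →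
      (∀ μ ∈ K, μ A = μ B) → (∀ x ∈ A, f x ∈ s) →
      ∃ g : X → ι, (∀ x ∈ B, g x ∈ s) ∧ ∀ i, IsClopen (B ∩ g ⁻¹' {i}) ∧
        ∀ μ ∈ K, μ (B ∩ g ⁻¹' {i}) = μ (A ∩ f ⁻¹' {i}) := by
  classical
  induction s using Finset.induction_on with
  | empty =>
    intro A B hA hB hf hAB hs
    have hA0 : A = ∅ := eq_empty_of_forall_notMem fun x hx => by simpa using hs x hx
    subst hA0
    have hB0 : B = ∅ := eq_empty_of_null hne hfull hB.isOpen fun μ hμ => by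
      rw [← hAB μ hμ]; simp
    subst hB0
    exact ⟨f, by simp, by simp [isClopen_empty]⟩
  | insert a s ha ih =>
    intro A B hA hB hf hAB hs
    obtain ⟨C, hC, hCB, hCμ⟩ := exists_subset_equiv hgood hfull hA (hf a) hB inter_subset_left hAB
    have hfa : ∀ i, i ≠ a → (A \ (A ∩ f ⁻¹' {a})) ∩ f ⁻¹' {i} = A ∩ f ⁻¹' {i} := by
      intro i hi
      ext x
      simp only [mem_inter_iff, mem_sdiff, mem_preimage, mem_singleton_iff]
      grind
    have hfa' : (A \ (A ∩ f ⁻¹' {a})) ∩ f ⁻¹' {a} = ∅ := by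
      ext x
      simp
    obtain ⟨g, hgs, hg⟩ := ih (A \ (A ∩ f ⁻¹' {a})) (B \ C) (hA.diff (hf a)) (hB.diff hC)
      (fun i => by
        by_cases hi : i = a
        · subst hi; rw [hfa']; exact isClopen_empty
        · rw [hfa i hi]; exact hf i)
      (fun μ hμ => by
        have h1 := measure_diff_add μ (hf a) (inter_subset_left (s := A))
        have h2 := measure_diff_add μ hC hCB
        rw [hCμ μ hμ, ← hAB μ hμ, ← h1] at h2
        exact (add_right_cancel h2).symm)
      (fun x hx => by
        have h1 := hs x hx.1
        have h2 : f x ≠ a := fun h => hx.2 ⟨hx.1, h⟩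
        simpa [h2] using h1)
    have hBa : B ∩ (fun x => if x ∈ C then a else g x) ⁻¹' {a} = C := by
      ext x
      by_cases hx : x ∈ C
      · simp [hx, hCB hx]
      · simp only [mem_inter_iff, mem_preimage, hx, if_false, mem_singleton_iff, iff_false]
        rintro ⟨h1, h2⟩
        exact ha (h2 ▸ hgs x ⟨h1, hx⟩)
    have hBi : ∀ i, i ≠ a → B ∩ (fun x => if x ∈ C then a else g x) ⁻¹' {i} =
        (B \ C) ∩ g ⁻¹' {i} := by
      intro i hi
      ext x
      by_cases hx : x ∈ C
      · simp [hx, hi.symm]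
      · simp [hx]
    refine ⟨fun x => if x ∈ C then a else g x, ?_, ?_⟩
    · intro x hx
      by_cases hxC : x ∈ C
      · simp [hxC]
      · simp [hxC, hgs x ⟨hx, hxC⟩]
    · intro i
      by_cases hi : i = a
      · subst hi
        rw [hBa]
        exact ⟨hC, hCμ⟩
      · rw [hBi i hi]
        refine ⟨(hg i).1, fun μ hμ => ?_⟩
        rw [(hg i).2 μ hμ, hfa i hi]

end Measures

/-! ### Stacking over a common base -/

section Stacking

variable {X : Type*} [TopologicalSpace X] [MeasurableSpace X] [OpensMeasurableSpace X]
  {K : Set (ProbabilityMeasure X)}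

/-- The types `t : τ` are subcolumns `D t` of `T` partitioning `X`, and each has a copy `E t` of
its base inside `U`, with `E ⊥ = E ⊤ = U`. The points of `U` are sorted according to the set `c` of
types `t` with `x ∈ E t`; above each class one stacks, in the order of `τ`, the
corresponding parts of the `D t` with `t ∈ c`. Every such column starts in `D ⊥` and ends in `D ⊤`. -/
theorem stack (hne : K.Nonempty) (hgood : Good K) (hfull : ∀ μ ∈ K, FullSupport μ)
    (T : KRPartition X K) {τ : Type} [Fintype τ] [LinearOrder τ] [BoundedOrder τ]
    (idx : τ → Fin T.numCols) (D : (t : τ) → Fin (T.height (idx t) + 1) → Set X)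
    (hD : ∀ t j, IsClopen (D t j)) (hDT : ∀ t j, D t j ⊆ T.atom (idx t) j)
    (hDpart : ∀ x : X, ∃! p : (t : τ) × Fin (T.height (idx t) + 1), x ∈ D p.1 p.2)
    (U : Set X) (E : τ → Set X) (hE : ∀ t, IsClopen (E t))
    (hEU : ∀ t, E t ⊆ U) (hED : ∀ t j, ∀ μ ∈ K, μ (E t) = μ (D t j))
    (hbot : E ⊥ = U) (htop : E ⊤ = U) :
    ∃ S : KRPartition X K, S.Refines T ∧ S.base ⊆ D ⊥ 0 ∧ S.top ⊆ D ⊤ (Fin.last _) := by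
  classical
  -- `f` is the partition of `U` generated by the sets `E t`; it is copied to each level `D t j` by `g`.
  let f : X → Finset τ := fun x => Finset.univ.filter fun t => x ∈ E t
  have hf : ∀ c, IsClopen (f ⁻¹' {c}) := by
    intro c
    have : f ⁻¹' {c} = ⋂ t, if t ∈ c then E t else (E t)ᶜ := by
      ext x
      simp only [mem_preimage, mem_singleton_iff, mem_iInter, f, Finset.ext_iff,
        Finset.mem_filter, Finset.mem_univ, true_and]
      refine forall_congr' fun t => ?_
      by_cases ht : t ∈ c <;> simp [ht]
    rw [this]
    refine isClopen_iInter_of_finite fun t => ?_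
    split_ifs
    exacts [hE t, (hE t).compl]
  have htrans := fun t j => exists_transport hne hgood hfull f Finset.univ (E t) (D t j) (hE t)
    (hD t j) (fun c => (hE t).inter (hf c)) (hED t j) (by simp)
  choose g _ hg using htrans
  -- The types met by column `c`. On classes `c` of points of `U`, which contain `⊥` and `⊤`, this is
  -- `c` itself; for the other `c` it makes the list nonempty, and the column consists of empty sets.
  let P : Finset τ → Finset τ := fun c => insert ⊥ (insert ⊤ c)
  have hEP : ∀ c, ∀ t ∈ P c, E t ∩ f ⁻¹' {c} = U ∩ f ⁻¹' {c} := by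
    intro c t ht
    refine subset_antisymm (inter_subset_inter_left _ (hEU t)) ?_
    rintro x ⟨hx, hxc⟩
    refine ⟨?_, hxc⟩
    simp only [P, Finset.mem_insert] at ht
    rcases ht with rfl | rfl | ht
    · rwa [hbot]
    · rwa [htop]
    · rw [mem_preimage, mem_singleton_iff] at hxc
      rw [← hxc] at ht
      simpa [f] using ht
  -- A type missing from `P c` contributes nothing to column `c`.
  have hgP : ∀ t j, ∀ x ∈ D t j, t ∈ P (g t j x) := by
    intro t j x hx
    by_contra ht
    have h0 : E t ∩ f ⁻¹' {g t j x} = ∅ := by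
      refine eq_empty_of_forall_notMem ?_
      rintro y ⟨hy, hyc⟩
      apply ht
      rw [mem_preimage, mem_singleton_iff] at hyc
      rw [← hyc]
      simp [P, f, hy]
    have h1 := eq_empty_of_null hne hfull (hg t j (g t j x)).1.isOpen fun μ hμ => by
      rw [(hg t j (g t j x)).2 μ hμ, h0]; simp
    exact (h1.subset ⟨hx, rfl⟩ : x ∈ (∅ : Set X))
  let e : Fin (Fintype.card (Finset τ)) ≃ Finset τ := (Fintype.equivFin (Finset τ)).symm
  have hPne : ∀ c, (P c).Nonempty := fun c => ⟨⊥, by simp [P]⟩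
  have hcard : ∀ c, (P c).card = (P c).card - 1 + 1 := fun c => by
    have := (hPne c).card_pos
    omega
  -- The increasing enumeration of `P c`, which starts at `⊥` and ends at `⊤`.
  let σ : (c : Finset τ) → Fin ((P c).card - 1 + 1) ≃o P c := fun c =>
    (P c).orderIsoOfFin (hcard c)
  have hσ0 : ∀ c, ((σ c 0 : P c) : τ) = ⊥ := by
    intro c
    have h := (σ c).monotone (Fin.zero_le ((σ c).symm ⟨⊥, by simp [P]⟩))
    rw [OrderIso.apply_symm_apply] at h
    exact le_bot_iff.1 h
  have hσl : ∀ c, ((σ c (Fin.last _) : P c) : τ) = ⊤ := by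
    intro c
    have h := (σ c).monotone (Fin.le_last ((σ c).symm ⟨⊤, by simp [P]⟩))
    rw [OrderIso.apply_symm_apply] at h
    exact top_le_iff.1 h
  obtain ⟨S, hS, hb, ht⟩ := assemble T _ (fun c => (P (e c)).card - 1)
    (fun c k => idx (σ (e c) k)) (fun c k j => D (σ (e c) k) j ∩ g (σ (e c) k) j ⁻¹' {e c})
    (fun c k j => (hg _ _ _).1)
    (fun c k j => inter_subset_left.trans (hDT _ _))
    (fun c k j k' j' μ hμ => by
      rw [(hg _ _ _).2 μ hμ, (hg _ _ _).2 μ hμ, hEP _ _ (σ (e c) k).2, hEP _ _ (σ (e c) k').2])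
    (fun x => by
      obtain ⟨⟨t, j⟩, hx, huniq⟩ := hDpart x
      have hx : x ∈ D t j := hx
      obtain ⟨c, hc⟩ := e.surjective (g t j x)
      obtain ⟨k, hk⟩ := (σ (e c)).surjective ⟨t, hc ▸ hgP t j x hx⟩
      have hk' : ((σ (e c) k : P (e c)) : τ) = t := by rw [hk]
      subst hk'
      refine ⟨⟨c, k, j⟩, ⟨hx, hc.symm⟩, ?_⟩
      rintro ⟨c', k', j'⟩ ⟨hx', hxc'⟩
      have h := huniq ⟨_, j'⟩ hx'
      have hxc' : g _ j' x = e c' := hxc'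
      have hgg : ∀ p q : (t : τ) × Fin (T.height (idx t) + 1), p = q →
          g p.1 p.2 x = g q.1 q.2 x := by rintro p q rfl; rfl
      have hcc : c' = c := e.injective (by rw [hc, ← hxc']; exact hgg _ _ h)
      subst hcc
      obtain ⟨h1, h2⟩ := Sigma.mk.inj_iff.1 h
      have hkk : k' = k := (σ (e c')).injective (Subtype.ext h1)
      subst hkk
      rw [eq_of_heq h2])
  refine ⟨S, hS, hb.trans (iUnion_subset fun c => ?_), ht.trans (iUnion_subset fun c => ?_)⟩
  · have : ∀ t, t = ⊥ → D t 0 ⊆ D ⊥ 0 := by rintro t rfl; rfl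
    exact inter_subset_left.trans (this _ (hσ0 _))
  · have : ∀ t, t = ⊤ → D t (Fin.last _) ⊆ D ⊤ (Fin.last _) := by rintro t rfl; rfl
    exact inter_subset_left.trans (this _ (hσl _))

end Stacking

/-! ### Small clopen sets -/

section Smallness

theorem continuous_measure_clopen {X : Type*} [MetricSpace X] [MeasurableSpace X] [BorelSpace X]
    {A : Set X} (hA : IsClopen A) :
    Continuous fun μ : ProbabilityMeasure X => μ A := by
  rw [continuous_iff_continuousAt]
  intro μ
  exact ProbabilityMeasure.tendsto_measure_of_null_frontier_of_tendsto Filter.tendsto_id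
    (by simp [hA.frontier_eq])

theorem exists_lower_bound {X : Type*} [MetricSpace X] [MeasurableSpace X] [BorelSpace X]
    {K : Set (ProbabilityMeasure X)} (hK : IsCompact K) (hfull : ∀ μ ∈ K, FullSupport μ) {A : Set X}
    (hA : IsClopen A) (hne : A.Nonempty) : ∃ δ : NNReal, 0 < δ ∧ ∀ μ ∈ K, δ ≤ μ A := by
  rcases K.eq_empty_or_nonempty with rfl | hKne
  · exact ⟨1, one_pos, by simp⟩
  · obtain ⟨μ, hμ, hmin⟩ := hK.exists_isMinOn hKne (continuous_measure_clopen hA).continuousOn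
    exact ⟨μ A, hfull μ hμ A hA.isOpen hne, fun ν hν => hmin hν⟩

variable {X : Type*} [MetricSpace X] [CompactSpace X] [TotallyDisconnectedSpace X]
  [MeasurableSpace X] [BorelSpace X] {K : Set (ProbabilityMeasure X)}

/-- Atomless measures give small mass to small neighbourhoods, uniformly over the compact `K`. -/
theorem exists_small_nhd (hK : IsCompact K) (hatom : ∀ μ ∈ K, Atomless μ) (x : X) {O : Set X}
    (hO : IsOpen O) (hx : x ∈ O) {δ : NNReal} (hδ : 0 < δ) :
    ∃ W, IsClopen W ∧ x ∈ W ∧ W ⊆ O ∧ ∀ μ ∈ K, μ W < δ := by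
  -- Each `μ` has its own small clopen neighbourhood; compactness of `K` leaves finitely many.
  have key : ∀ μ ∈ K, ∃ W, IsClopen W ∧ x ∈ W ∧ W ⊆ O ∧ μ W < δ := by
    intro μ hμ
    have h0 : (μ : Measure X) {x} < δ := by
      have := hatom μ hμ x
      rw [← ProbabilityMeasure.ennreal_coeFn_eq_coeFn_toMeasure, this]
      exact_mod_cast hδ
    obtain ⟨O', hO'x, hO', hO'δ⟩ := Set.exists_isOpen_lt_of_lt {x} _ h0
    obtain ⟨W, hW, hxW, hWO⟩ := compact_exists_isClopen_in_isOpen (hO.inter hO')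
      ⟨hx, hO'x rfl⟩
    refine ⟨W, hW, hxW, hWO.trans inter_subset_left, ?_⟩
    have h1 : (μ : Measure X) W < δ :=
      (measure_mono (hWO.trans inter_subset_right)).trans_lt hO'δ
    rw [← ProbabilityMeasure.ennreal_coeFn_eq_coeFn_toMeasure] at h1
    exact_mod_cast h1
  choose! W hW hxW hWO hWδ using key
  obtain ⟨t, htK, htcov⟩ := hK.elim_nhds_subcover (fun μ => {ν | ν (W μ) < δ}) fun μ hμ =>
    (isOpen_lt (continuous_measure_clopen (hW μ hμ)) continuous_const).mem_nhds (hWδ μ hμ)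
  obtain ⟨W₀, hW₀, hxW₀, hW₀O⟩ := compact_exists_isClopen_in_isOpen hO hx
  refine ⟨W₀ ∩ ⋂ μ ∈ t, W μ, hW₀.inter (isClopen_biInter_finset fun μ hμ => hW μ (htK μ hμ)), ⟨hxW₀, ?_⟩,
    inter_subset_left.trans hW₀O, ?_⟩
  · simp only [mem_iInter]
    exact fun μ hμ => hxW μ (htK μ hμ)
  · intro ν hν
    obtain ⟨μ, hμt, hμ⟩ := mem_iUnion₂.1 (htcov hν)
    exact (ν.apply_mono (inter_subset_right.trans (biInter_subset_of_mem hμt))).trans_lt hμ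

/-- A finite clopen partition of `X`, encoded as a labelling, whose pieces all have mass less than
`δ` for every measure in `K`. -/
theorem exists_small_labelling (hK : IsCompact K) (hatom : ∀ μ ∈ K, Atomless μ) {δ : NNReal}
    (hδ : 0 < δ) :
    ∃ (M : ℕ) (f : X → Fin M), ∀ i, IsClopen (f ⁻¹' {i}) ∧ ∀ μ ∈ K, μ (f ⁻¹' {i}) < δ := by
  classical
  choose W hW hxW _ hWδ using fun x : X =>
    exists_small_nhd hK hatom x isOpen_univ (mem_univ x) hδ
  obtain ⟨t, ht⟩ := isCompact_univ.elim_finite_subcover W (fun x => (hW x).isOpen)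
    fun x _ => mem_iUnion.2 ⟨x, hxW x⟩
  let e := t.equivFin
  let V : Fin t.card → Set X := fun i => W (e.symm i)
  have hcov : ∀ x, ∃ i, x ∈ V i := by
    intro x
    obtain ⟨y, hy, hxy⟩ := mem_iUnion₂.1 (ht (mem_univ x))
    exact ⟨e ⟨y, hy⟩, by simpa [V] using hxy⟩
  have hV : ∀ i, IsClopen (V i) := fun i => hW _
  -- Disjointification of the cover: each point is labelled by the first member containing it.
  refine ⟨t.card, fun x => Fin.find (fun i => x ∈ V i) (hcov x), fun i => ?_⟩
  have hpre : (fun x => Fin.find (fun i => x ∈ V i) (hcov x)) ⁻¹' {i} =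
      V i ∩ ⋂ l ∈ Finset.Iio i, (V l)ᶜ := by
    ext x
    simp [Fin.find_eq_iff]
  rw [hpre]
  refine ⟨(hV i).inter (isClopen_biInter_finset fun l _ => (hV l).compl), fun μ hμ => ?_⟩
  exact (μ.apply_mono inter_subset_left).trans_lt (hWδ _ μ hμ)

/-- The prospective base `U` and top `V`. They are taken disjoint, and of less than half the mass
of `A`, so that a single column can be cut into a part starting with `U`, a disjoint part ending
with `V`, and a remainder, even when its height is one level. -/
theorem exists_small_pair [PerfectSpace X] (hK : IsCompact K) (hgood : Good K)
    (hatom : ∀ μ ∈ K, Atomless μ) (hfull : ∀ μ ∈ K, FullSupport μ) {A B : Set X}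
    (hA : IsClopen A) (hB : IsClopen B) (hAne : A.Nonempty) (hBne : B.Nonempty)
    {ε : ℝ} (hε : 0 < ε) :
    ∃ U V, IsClopen U ∧ IsClopen V ∧ U ⊆ A ∧ V ⊆ B ∧ U.Nonempty ∧ Disjoint U V ∧
      (∀ μ ∈ K, μ U = μ V) ∧ (∀ μ ∈ K, μ U + μ U < μ A) ∧
      (∃ x, U ⊆ Metric.ball x ε) ∧ ∃ y, V ⊆ Metric.ball y ε := by
  obtain ⟨x, hx⟩ := hAne
  obtain ⟨y, hy, hyx⟩ : ∃ y ∈ B, y ≠ x := by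
    obtain ⟨y, hyB, hy⟩ :=
      (dense_univ.sdiff_singleton x).inter_open_nonempty B hB.isOpen hBne
    exact ⟨y, hyB, hy.2⟩
  obtain ⟨O₁, O₂, hO₁, hO₂, hxO, hyO, hdisj⟩ := t2_separation hyx.symm
  obtain ⟨V₀, hV₀, hyV₀, hV₀O⟩ := compact_exists_isClopen_in_isOpen
    ((hB.isOpen.inter hO₂).inter (Metric.isOpen_ball (x := y) (ε := ε)))
    ⟨⟨hy, hyO⟩, Metric.mem_ball_self hε⟩
  obtain ⟨δ, hδ, hδA⟩ := exists_lower_bound hK hfull hA ⟨x, hx⟩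
  obtain ⟨δ', hδ', hδV⟩ := exists_lower_bound hK hfull hV₀ ⟨y, hyV₀⟩
  obtain ⟨U, hU, hxU, hUO, hUδ⟩ := exists_small_nhd hK hatom x
    ((hA.isOpen.inter hO₁).inter (Metric.isOpen_ball (x := x) (ε := ε)))
    ⟨⟨hx, hxO⟩, Metric.mem_ball_self hε⟩ (lt_min (half_pos hδ) hδ')
  obtain ⟨V, hV, hVV₀, hVU⟩ := hgood U V₀ hU hV₀ fun μ hμ =>
    ((hUδ μ hμ).trans_le (min_le_right _ _)).trans_le (hδV μ hμ)
  refine ⟨U, V, hU, hV, fun z hz => (hUO hz).1.1, fun z hz => (hV₀O (hVV₀ hz)).1.1, ⟨x, hxU⟩,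
    hdisj.mono (fun z hz => (hUO hz).1.2) fun z hz => (hV₀O (hVV₀ hz)).1.2,
    fun μ hμ => (hVU μ hμ).symm, fun μ hμ => ?_, ⟨x, fun z hz => (hUO hz).2⟩,
    ⟨y, fun z hz => (hV₀O (hVV₀ hz)).2⟩⟩
  have h := (hUδ μ hμ).trans_le (min_le_left _ _)
  calc μ U + μ U < δ / 2 + δ / 2 := add_lt_add h h
    _ = δ := add_halves δ
    _ ≤ μ A := hδA μ hμ

end Smallness

/-! ### Cutting the columns -/

section Cutting

variable {X : Type*} [TopologicalSpace X] [MeasurableSpace X] [OpensMeasurableSpace X]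
  {K : Set (ProbabilityMeasure X)}

/-- Two disjoint copies `A`, `B` of `U` and `V` in the level `R`. The propositions `p` and `q` say
that `R` is the level containing the original `U`, respectively `V`, in which case the copy has to be
the original. -/
theorem exists_disjoint_copies (hgood : Good K) {R U V : Set X} (hR : IsClopen R)
    (hU : IsClopen U) (hV : IsClopen V) (hUV : Disjoint U V) (hUVμ : ∀ μ ∈ K, μ U = μ V)
    (hsmall : ∀ μ ∈ K, μ U + μ U < μ R) (p q : Prop) (hp : p → U ⊆ R) (hq : q → V ⊆ R) :
    ∃ A B, IsClopen A ∧ IsClopen B ∧ A ⊆ R ∧ B ⊆ R ∧ Disjoint A B ∧ (∀ μ ∈ K, μ A = μ U) ∧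
      (∀ μ ∈ K, μ B = μ U) ∧ (p → A = U) ∧ (q → B = V) := by
  have key : ∀ C W : Set X, IsClopen C → IsClopen W → W ⊆ R → (∀ μ ∈ K, μ C = μ U) →
      (∀ μ ∈ K, μ W = μ U) → ∃ D, IsClopen D ∧ D ⊆ R ∧ Disjoint W D ∧ ∀ μ ∈ K, μ D = μ C := by
    intro C W hC hW hWR hCμ hWμ
    obtain ⟨D, hD, hDs, hDμ⟩ := hgood C (R \ W) hC (hR.diff hW) fun μ hμ => by
      have h1 := measure_diff_add μ hW hWR
      have h2 := hsmall μ hμ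
      rw [← h1, hWμ μ hμ] at h2
      rw [hCμ μ hμ]
      exact lt_of_add_lt_add_right h2
    exact ⟨D, hD, hDs.trans sdiff_subset, disjoint_sdiff_right.mono_right hDs, hDμ⟩
  have hVU : ∀ μ ∈ K, μ V = μ U := fun μ hμ => (hUVμ μ hμ).symm
  by_cases hq' : q
  · by_cases hp' : p
    · exact ⟨U, V, hU, hV, hp hp', hq hq', hUV, fun _ _ => rfl, hVU, fun _ => rfl, fun _ => rfl⟩
    · obtain ⟨A, hA, hAR, hAV, hAμ⟩ := key U V hU hV (hq hq') (fun _ _ => rfl) hVU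
      exact ⟨A, V, hA, hV, hAR, hq hq', hAV.symm, hAμ, hVU, fun h => (hp' h).elim, fun _ => rfl⟩
  · obtain ⟨A, hA, hAR, hAμ, hpA⟩ : ∃ A, IsClopen A ∧ A ⊆ R ∧ (∀ μ ∈ K, μ A = μ U) ∧
        (p → A = U) := by
      by_cases hp' : p
      · exact ⟨U, hU, hp hp', fun _ _ => rfl, fun _ => rfl⟩
      · obtain ⟨A, hA, hAR, hAμ⟩ := hgood U R hU hR fun μ hμ =>
          (le_add_of_nonneg_left zero_le).trans_lt (hsmall μ hμ)
        exact ⟨A, hA, hAR, hAμ, fun h => (hp' h).elim⟩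
    obtain ⟨B, hB, hBR, hAB, hBμ⟩ := key U A hU hA hAR (fun _ _ => rfl) hAμ
    exact ⟨A, B, hA, hB, hAR, hBR, hAB, hAμ, hBμ, hpA, fun h => (hq' h).elim⟩

/-- The subcolumns of column `i₀` that start with `U` and end with `V`, level by level. To spare
dependent types they are defined on all columns, and are empty outside `i₀`. -/
theorem exists_start_finish (hgood : Good K) (T : KRPartition X K) (i₀ : Fin T.numCols)
    {U V : Set X} (hU : IsClopen U) (hV : IsClopen V) (hUV : Disjoint U V)
    (hUVμ : ∀ μ ∈ K, μ U = μ V) (hsmall : ∀ μ ∈ K, μ U + μ U < μ (T.atom i₀ 0))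
    (hU0 : U ⊆ T.atom i₀ 0) (hVl : V ⊆ T.atom i₀ (Fin.last _))
    (i : Fin T.numCols) (j : Fin (T.height i + 1)) :
    ∃ A B, IsClopen A ∧ IsClopen B ∧ A ⊆ T.atom i j ∧ B ⊆ T.atom i j ∧ Disjoint A B ∧
      (i ≠ i₀ → A = ∅ ∧ B = ∅) ∧
      (i = i₀ → (∀ μ ∈ K, μ A = μ U) ∧ (∀ μ ∈ K, μ B = μ U) ∧ (j = 0 → A = U) ∧
        (j = Fin.last _ → B = V)) := by
  by_cases hi : i = i₀
  · subst hi
    obtain ⟨A, B, hA, hB, hAR, hBR, hAB, h⟩ := exists_disjoint_copies hgood (T.clopen i j) hU hV hUV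
      hUVμ (fun μ hμ => by rw [T.equivK i j 0 μ hμ]; exact hsmall μ hμ)
      (j = 0) (j = Fin.last _) (by rintro rfl; exact hU0) (by rintro rfl; exact hVl)
    exact ⟨A, B, hA, hB, hAR, hBR, hAB, fun h => (h rfl).elim, fun _ => h⟩
  · exact ⟨∅, ∅, isClopen_empty, isClopen_empty, empty_subset _, empty_subset _, disjoint_empty _,
      fun _ => ⟨rfl, rfl⟩, fun h => (hi h).elim⟩

/-- Any small enough pair of disjoint equivalent sets `U`, `V` in the base and the top of a column
of `T` contains the base and the top of some refinement of `T`; the labelling `f` cuts `X` into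
pieces smaller than `U`. -/
theorem exists_refinement_of_pair (hne : K.Nonempty) (hgood : Good K)
    (hfull : ∀ μ ∈ K, FullSupport μ) (T : KRPartition X K) (i₀ : Fin T.numCols)
    {U V : Set X} (hU : IsClopen U) (hV : IsClopen V) (hUV : Disjoint U V)
    (hUVμ : ∀ μ ∈ K, μ U = μ V) (hsmall : ∀ μ ∈ K, μ U + μ U < μ (T.atom i₀ 0))
    (hU0 : U ⊆ T.atom i₀ 0) (hVl : V ⊆ T.atom i₀ (Fin.last _))
    {M : ℕ} (f : X → Fin M) (hf : ∀ m, IsClopen (f ⁻¹' {m}))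
    (hfU : ∀ m, ∀ μ ∈ K, μ (f ⁻¹' {m}) < μ U) :
    ∃ S : KRPartition X K, S.Refines T ∧ S.base ⊆ U ∧ S.top ⊆ V := by
  classical
  choose A B hA hB hAT hBT hAB hi hi₀ using
    exists_start_finish hgood T i₀ hU hV hUV hUVμ hsmall hU0 hVl
  -- What remains of column `i` once the starting and finishing subcolumns are removed.
  let R : (i : Fin T.numCols) → Fin (T.height i + 1) → Set X := fun i j =>
    T.atom i j \ (A i j ∪ B i j)
  have hR : ∀ i j, IsClopen (R i j) := fun i j => (T.clopen i j).diff ((hA i j).union (hB i j))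
  have hRμ : ∀ i j, ∀ μ ∈ K, μ (R i 0) = μ (R i j) := by
    intro i j μ hμ
    have hAB' : μ (A i 0 ∪ B i 0) = μ (A i j ∪ B i j) := by
      by_cases h : i = i₀
      · rw [measure_union_eq μ (hB i 0) (hAB i 0), measure_union_eq μ (hB i j) (hAB i j),
          (hi₀ i 0 h).1 μ hμ, (hi₀ i 0 h).2.1 μ hμ, (hi₀ i j h).1 μ hμ, (hi₀ i j h).2.1 μ hμ]
      · rw [(hi i 0 h).1, (hi i 0 h).2, (hi i j h).1, (hi i j h).2]
    have h0 := measure_diff_add μ ((hA i 0).union (hB i 0)) (union_subset (hAT i 0) (hBT i 0))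
    have hj := measure_diff_add μ ((hA i j).union (hB i j)) (union_subset (hAT i j) (hBT i j))
    rw [T.equivK i 0 j μ hμ, ← hj, hAB'] at h0
    exact add_right_cancel h0
  -- Cut the remainders vertically into subcolumns thinner than `U`, so that each has a copy `E i m`
  -- of its base in `U`.
  choose g _ hg using fun i j => exists_transport hne hgood hfull f Finset.univ (R i 0) (R i j)
    (hR i 0) (hR i j) (fun m => (hR i 0).inter (hf m)) (hRμ i j) (by simp)
  choose E hE hEU hEμ using fun i m => hgood (R i 0 ∩ f ⁻¹' {m}) U ((hR i 0).inter (hf m)) hU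
    fun μ hμ => (μ.apply_mono inter_subset_right).trans_lt (hfU m μ hμ)
  -- Types of subcolumns: `⊥` starts with `U`, `⊤` ends with `V`, and `(i, m)` is the part of the
  -- remainder of column `i` labelled `m`. The `Option` constructors `none`, `some none` and
  -- `some (some p)` are `⊥`, `⊤` and the coercion of `p`.
  let idx : WithBot (WithTop (Fin T.numCols ×ₗ Fin M)) → Fin T.numCols
    | none => i₀
    | some none => i₀
    | some (some p) => (ofLex p).1
  let D : (t : WithBot (WithTop (Fin T.numCols ×ₗ Fin M))) → Fin (T.height (idx t) + 1) → Set X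
    | none => A i₀
    | some none => B i₀
    | some (some p) => fun j => R (ofLex p).1 j ∩ g (ofLex p).1 j ⁻¹' {(ofLex p).2}
  let E' : WithBot (WithTop (Fin T.numCols ×ₗ Fin M)) → Set X
    | none => U
    | some none => U
    | some (some p) => E (ofLex p).1 (ofLex p).2
  have hDT : ∀ t j, D t j ⊆ T.atom (idx t) j := by
    rintro (_ | _ | p) j
    · exact hAT i₀ j
    · exact hBT i₀ j
    · exact inter_subset_left.trans sdiff_subset
  obtain ⟨S, hS, hb, ht⟩ := stack hne hgood hfull T idx D
    (by
      rintro (_ | _ | p) j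
      · exact hA i₀ j
      · exact hB i₀ j
      · exact (hg _ j _).1)
    hDT
    (fun x => by
      refine existsUnique_of_exists_of_unique ?_ ?_
      · obtain ⟨⟨i, j⟩, hx, -⟩ := T.partition x
        have hx : x ∈ T.atom i j := hx
        by_cases hxA : x ∈ A i j
        · have h : i = i₀ := by
            by_contra h
            rw [(hi i j h).1] at hxA
            exact hxA
          subst h
          exact ⟨⟨none, j⟩, hxA⟩
        · by_cases hxB : x ∈ B i j
          · have h : i = i₀ := by
              by_contra h
              rw [(hi i j h).2] at hxB
              exact hxB
            subst h
            exact ⟨⟨some none, j⟩, hxB⟩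
          · exact ⟨⟨some (some (toLex (i, g i j x))), j⟩,
              ⟨⟨hx, fun h => h.elim hxA hxB⟩, rfl⟩⟩
      · rintro ⟨t, j⟩ ⟨t', j'⟩ hx hx'
        have h : (⟨idx t, j⟩ : (i : Fin T.numCols) × Fin (T.height i + 1)) = ⟨idx t', j'⟩ :=
          (T.partition x).unique (hDT t j hx) (hDT t' j' hx')
        obtain ⟨h1, h2⟩ := Sigma.mk.inj_iff.1 h
        have hdisj : ∀ i j, x ∈ A i j → x ∈ B i j → False := fun i j ha hb =>
          disjoint_left.1 (hAB i j) ha hb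
        rcases t with (_ | _ | ⟨i, m⟩) <;> rcases t' with (_ | _ | ⟨i', m'⟩)
        · rw [eq_of_heq h2]
        · obtain rfl := eq_of_heq h2
          exact (hdisj _ _ hx hx').elim
        · obtain rfl : i₀ = i' := h1
          obtain rfl := eq_of_heq h2
          exact (hx'.1.2 (Or.inl hx)).elim
        · obtain rfl := eq_of_heq h2
          exact (hdisj _ _ hx' hx).elim
        · rw [eq_of_heq h2]
        · obtain rfl : i₀ = i' := h1
          obtain rfl := eq_of_heq h2
          exact (hx'.1.2 (Or.inr hx)).elim
        · obtain rfl : i = i₀ := h1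
          obtain rfl := eq_of_heq h2
          exact (hx.1.2 (Or.inl hx')).elim
        · obtain rfl : i = i₀ := h1
          obtain rfl := eq_of_heq h2
          exact (hx.1.2 (Or.inr hx')).elim
        · obtain rfl : i = i' := h1
          obtain rfl := eq_of_heq h2
          have hm : g i j x = m := hx.2
          have hm' : g i j x = m' := hx'.2
          rw [← hm, ← hm'])
    U E'
    (by
      rintro (_ | _ | p)
      exacts [hU, hU, hE _ _])
    (by
      rintro (_ | _ | p)
      exacts [Subset.rfl, Subset.rfl, hEU _ _])
    (by
      rintro (_ | _ | p) j μ hμ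
      · exact ((hi₀ i₀ j rfl).1 μ hμ).symm
      · exact ((hi₀ i₀ j rfl).2.1 μ hμ).symm
      · exact (hEμ _ _ μ hμ).trans ((hg _ j _).2 μ hμ).symm)
    rfl rfl
  exact ⟨S, hS, hb.trans ((hi₀ i₀ 0 rfl).2.2.1 rfl).subset,
    ht.trans ((hi₀ i₀ (Fin.last _) rfl).2.2.2 rfl).subset⟩

end Cutting

end DynSimplex

theorem exists_refinement_small_base_top
    {X : Type*} [MetricSpace X] [CompactSpace X]
    [TotallyDisconnectedSpace X] [PerfectSpace X]
    [Nonempty X] [MeasurableSpace X] [BorelSpace X]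
    (K : Set (MeasureTheory.ProbabilityMeasure X)) (hK : DynSimplex.DynamicalSimplex K)
    (T : DynSimplex.KRPartition X K) (ε : ℝ) (hε : 0 < ε) :
    ∃ S : DynSimplex.KRPartition X K, S.Refines T ∧
      Metric.diam S.base < ε ∧ Metric.diam S.top < ε := by
  obtain ⟨hne, hcomp, -, hreg, hgood, -⟩ := hK
  have hatom : ∀ μ ∈ K, DynSimplex.Atomless μ := fun μ hμ => (hreg μ hμ).1
  have hfull : ∀ μ ∈ K, DynSimplex.FullSupport μ := fun μ hμ => (hreg μ hμ).2
  obtain ⟨x₀⟩ := ‹Nonempty X›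
  obtain ⟨⟨i₀, j₀⟩, hx₀, -⟩ := T.partition x₀
  -- One atom of column `i₀` contains `x₀`; the others are equivalent to it, hence not empty either.
  have hatomne : ∀ j, (T.atom i₀ j).Nonempty := by
    intro j
    by_contra h
    have h0 := DynSimplex.eq_empty_of_null hne hfull (T.clopen i₀ j₀).isOpen fun μ hμ => by
      rw [T.equivK i₀ j₀ j μ hμ, Set.not_nonempty_iff_eq_empty.1 h]; simp
    exact (h0.subset hx₀ : x₀ ∈ (∅ : Set X))
  obtain ⟨U, V, hU, hV, hUT, hVT, hUne, hUV, hUVμ, hsmall, ⟨x, hx⟩, ⟨y, hy⟩⟩ :=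
    DynSimplex.exists_small_pair hcomp hgood hatom hfull (T.clopen i₀ 0)
      (T.clopen i₀ (Fin.last _)) (hatomne _) (hatomne _) (ε := ε / 4) (by positivity)
  obtain ⟨δ, hδ, hδU⟩ := DynSimplex.exists_lower_bound hcomp hfull hU hUne
  obtain ⟨M, f, hf⟩ := DynSimplex.exists_small_labelling hcomp hatom hδ
  obtain ⟨S, hS, hb, ht⟩ := DynSimplex.exists_refinement_of_pair hne hgood hfull T i₀ hU hV hUV
    hUVμ hsmall hUT hVT f (fun m => (hf m).1) fun m μ hμ => ((hf m).2 μ hμ).trans_le (hδU μ hμ)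
  have hdiam : ∀ (A : Set X) (z : X), A ⊆ Metric.ball z (ε / 4) → Metric.diam A < ε := by
    intro A z hA
    have h1 := Metric.diam_mono hA Metric.isBounded_ball
    have h2 := Metric.diam_ball (x := z) (r := ε / 4) (by positivity)
    linarith
  exact ⟨S, hS, hdiam _ x (hb.trans hx), hdiam _ y (ht.trans hy)⟩
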